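/- Let U be an open connected subset of ℝⁿ and let f : U → ℝⁿ be differentiable, i.e. at every x ∈ U there is a continuous linear map f′(x) : ℝⁿ → ℝⁿ with HasFDerivAt f (f′(x)) x. Let x₀, x₁ ∈ U, α ∈ ℝ, and let n₀ be an odd natural number and n₁ an even natural number. Suppose there are real polynomials q₀ and q₁ such that for every λ ∈ ℝ: det(f′(x₀) − λ·id) = q₀(λ)·(α − λ)^{n₀} and det(f′(x₁) − λ·id) = q₁(λ)·(α − λ)^{n₁}, and suppose q₀(α)·q₁(α) < 0. Then there exists δ > 0 such that for every λ ∈ (α − δ, α) there exists x₂ ∈ U with det(f′(x₂) − λ·id) = 0. -/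

import Mathlib

/-!
For `l` slightly to the left of `α` the Jacobian determinant of `x ↦ f x - l • x` has opposite
signs at `x₀` and `x₁`, so it is enough to show that the Jacobian determinant of a differentiable
map on a connected open set `U` has constant sign as soon as it has no zero.

If two maps agree on the boundary of a ball, both vanish somewhere inside and all their zeros are
regular, then comparing degrees rules out that the Jacobian is positive at all zeros of one map
and negative at all zeros of the other. For `C¹` maps `u` the degree is `∫ det D(Φ ∘ u)` with
`det DΦ ≥ 0` concentrated near `0`. It depends only on the values outside the domain of
integration: for large `s` the map `w + s • id` is a bijection, so `∫ det (Dw + s • id)` is the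
volume of an image determined by the outside values, and `det Dw` is a fixed linear combination of
the polynomial values `det (Dw + s • id)`. A map which is merely continuous, and differentiable at
its zeros with invertible derivative, is approximated by a `C¹` map with the same zeros and the
same signs.

Suppose the sign of the determinant jumps somewhere in `U`. By Baire's theorem the set of jumps
has a point `a` near which `dist y x ≤ κ * dist (g y) (g x)` for all jumps `x`, and the degree
shows that all jumps near `a` have the sign of `a`. A ball of the opposite sign touches this set
at some `x`; close to `x` the map `g` is almost its linearization at `x`, so by the degree the
sign at `x` also occurs inside the ball, a contradiction.
-/

open Filter Function Metric Module MeasureTheory Set Topology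
open scoped Manifold NNReal

section Determinant

variable {E : Type*} [NormedAddCommGroup E] [NormedSpace ℝ E] [FiniteDimensional ℝ E]

theorem exists_ne_zero_apply_eq_zero_of_det_eq_zero {A : E →L[ℝ] E} (hA : A.det = 0) :
    ∃ v ≠ 0, A v = 0 := by
  obtain ⟨v, hv, hv0⟩ := (Submodule.ne_bot_iff _).1
    (LinearMap.bot_lt_ker_of_det_eq_zero (f := (A : E →ₗ[ℝ] E)) hA).ne'
  exact ⟨v, hv0, hv⟩

theorem exists_antilipschitzWith_of_det_ne_zero {A : E →L[ℝ] E} (hA : A.det ≠ 0) :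
    ∃ K > 0, AntilipschitzWith K A :=
  A.toLinearMap.injective_iff_antilipschitz.1
    (A.toContinuousLinearEquivOfDetNeZero hA).injective

theorem isBigO_sub_rev_of_det_ne_zero {g : E → E} {L : E →L[ℝ] E} {x : E}
    (hg : HasFDerivAt g L x) (hL : L.det ≠ 0) : (fun y ↦ y - x) =O[𝓝 x] fun y ↦ g y - g x :=
  (hg.isTheta_sub (L.toContinuousLinearEquivOfDetNeZero hL).toHomeomorph.isInducing).isBigO_symm

theorem det_mul_det_pos_of_norm_sub_lt {L M : E →L[ℝ] E}
    (h : ∀ v ≠ 0, ‖M v - L v‖ < ‖L v‖) : 0 < M.det * L.det := by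
  let γ : ℝ → ℝ := fun t ↦ (L + t • (M - L)).det
  have hγ : Continuous γ := ContinuousLinearMap.continuous_det.comp (by fun_prop)
  have hγ_ne : ∀ t ∈ uIcc (0 : ℝ) 1, γ t ≠ 0 := by
    intro t ht hdet
    obtain ⟨v, hv, hLMv⟩ := exists_ne_zero_apply_eq_zero_of_det_eq_zero hdet
    rw [uIcc_of_le zero_le_one] at ht
    have hLv : ‖L v‖ = t * ‖M v - L v‖ := by
      rw [← Real.norm_of_nonneg ht.1, ← norm_smul, ← norm_neg (t • _)]
      exact congrArg _ (eq_neg_of_add_eq_zero_left hLMv)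
    nlinarith [h v hv, ht.2, norm_nonneg (M v - L v)]
  have h_path : 0 < γ 1 * γ 0 := by
    by_contra! hle
    have hmem : (0 : ℝ) ∈ uIcc (γ 0) (γ 1) := by
      rw [mem_uIcc]
      rcases mul_nonpos_iff.1 hle with ⟨h1, h0⟩ | ⟨h1, h0⟩
      exacts [.inl ⟨h0, h1⟩, .inr ⟨h1, h0⟩]
    obtain ⟨t, ht, hzero⟩ := intermediate_value_uIcc hγ.continuousOn hmem
    exact hγ_ne t ht hzero
  simpa [γ] using h_path

theorem det_add_smul_id_pos {A : E →L[ℝ] E} {s : ℝ} (hs : ‖A‖ < s) :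
    0 < (A + s • ContinuousLinearMap.id ℝ E).det := by
  have hs_pos : 0 < s := (norm_nonneg A).trans_lt hs
  have hdet : 0 < (s • ContinuousLinearMap.id ℝ E).det := by
    rw [ContinuousLinearMap.det, ContinuousLinearMap.toLinearMap_smul, LinearMap.det_smul,
      ContinuousLinearMap.coe_id, LinearMap.det_id, mul_one]
    exact pow_pos hs_pos _
  refine pos_of_mul_pos_left (det_mul_det_pos_of_norm_sub_lt fun v hv ↦ ?_) hdet.le
  calc ‖(A + s • ContinuousLinearMap.id ℝ E) v - (s • ContinuousLinearMap.id ℝ E) v‖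
      = ‖A v‖ := by simp
    _ ≤ ‖A‖ * ‖v‖ := A.le_opNorm v
    _ < s * ‖v‖ := mul_lt_mul_of_pos_right hs (norm_pos_iff.2 hv)
    _ = ‖(s • ContinuousLinearMap.id ℝ E) v‖ := by
      simp [norm_smul, abs_of_pos hs_pos]

theorem det_eq_sum_lagrange_basis_mul_det_add_smul_id {s : Finset ℝ}
    (hs : finrank ℝ E < s.card) (A : E →L[ℝ] E) :
    A.det = ∑ t ∈ s, (Lagrange.basis s id t).eval 0 *
      (A + t • ContinuousLinearMap.id ℝ E).det := by
  let p := LinearMap.charpoly (-(A : E →ₗ[ℝ] E))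
  have hp_eval (t : ℝ) : p.eval t = (A + t • ContinuousLinearMap.id ℝ E).det := by
    rw [LinearMap.eval_charpoly, ContinuousLinearMap.det]
    congr 1
    ext v
    simp [add_comm]
  have hp_degree : p.degree < s.card := by
    refine Polynomial.degree_le_natDegree.trans_lt ?_
    rw [LinearMap.charpoly_natDegree]
    exact_mod_cast hs
  have hp_interp := congrArg (Polynomial.eval 0)
    (Lagrange.eq_interpolate (v := id) injective_id.injOn hp_degree)
  rw [hp_eval, zero_smul, add_zero, Lagrange.interpolate_apply,
    Polynomial.eval_finsetSum] at hp_interp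
  rw [hp_interp]
  refine Finset.sum_congr rfl fun t _ ↦ ?_
  rw [Polynomial.eval_mul, Polynomial.eval_C, id, hp_eval, mul_comm]

end Determinant

section JacobianIntegral

variable {E : Type*} [NormedAddCommGroup E] [NormedSpace ℝ E]

theorem bijective_add_smul_of_lipschitzWith [CompleteSpace E] {u : E → E} {K : ℝ≥0} {s : ℝ}
    (hu : LipschitzWith K u) (hs : K < s) : Bijective fun x ↦ u x + s • x := by
  have hs_pos : 0 < s := K.coe_nonneg.trans_lt hs
  let e : E ≃L[ℝ] E := .smulLeft (Units.mk0 s hs_pos.ne')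
  have happrox : ApproximatesLinearOn (fun x ↦ u x + s • x) (e : E →L[ℝ] E) univ K := by
    rw [ApproximatesLinearOn.approximatesLinearOn_iff_lipschitzOnWith, lipschitzOnWith_univ]
    convert hu using 1
    ext x
    exact add_sub_cancel_right _ _
  have hnorm : ‖(e.symm : E →L[ℝ] E)‖ ≤ s⁻¹ :=
    ContinuousLinearMap.opNorm_le_bound _ (inv_nonneg.2 hs_pos.le) fun x ↦ by
      change ‖s⁻¹ • x‖ ≤ s⁻¹ * ‖x‖
      rw [norm_smul, Real.norm_of_nonneg (inv_nonneg.2 hs_pos.le)]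
  have hconst : Subsingleton E ∨ K < ‖(e.symm : E →L[ℝ] E)‖₊⁻¹ :=
    (subsingleton_or_nontrivial E).imp_right fun (_ : Nontrivial E) ↦
      NNReal.coe_lt_coe.1 <| hs.trans_le <| (le_inv_comm₀ hs_pos e.norm_symm_pos).2 hnorm
  exact ⟨injOn_univ.1 (happrox.injOn hconst), happrox.surjective hconst⟩

theorem continuous_det_fderiv {u : E → E} (hu : ContDiff ℝ 1 u) :
    Continuous fun x ↦ (fderiv ℝ u x).det :=
  ContinuousLinearMap.continuous_det.comp (hu.continuous_fderiv one_ne_zero)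

theorem image_eq_image_of_bijective_of_eqOn_compl {X Y : Type*} {f g : X → Y} {B : Set X}
    (hf : Bijective f) (hg : Bijective g) (h : EqOn f g Bᶜ) : f '' B = g '' B := by
  rw [← compl_inj_iff, ← image_compl_eq hf, ← image_compl_eq hg, h.image_eq]

theorem integrableOn_of_continuous_of_isBounded {X : Type*} [MetricSpace X] [ProperSpace X]
    [MeasurableSpace X] [OpensMeasurableSpace X] {μ : Measure X} [IsFiniteMeasureOnCompacts μ]
    {f : X → ℝ} (hf : Continuous f) {B : Set X} (hB : Bornology.IsBounded B) :
    IntegrableOn f B μ :=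
  (hf.continuousOn.integrableOn_compact hB.isCompact_closure).mono_set subset_closure

variable [FiniteDimensional ℝ E] [MeasurableSpace E] [BorelSpace E]
  (μ : Measure E) [μ.IsAddHaarMeasure]

theorem setIntegral_det_fderiv_add_smul_id {u : E → E} {K : ℝ≥0} {s : ℝ} {B : Set E}
    (hu : LipschitzWith K u) (hu' : Differentiable ℝ u) (hs : K < s) (hB : MeasurableSet B) :
    ∫ x in B, (fderiv ℝ u x + s • ContinuousLinearMap.id ℝ E).det ∂μ =
      μ.real ((fun x ↦ u x + s • x) '' B) := by
  have hderiv : ∀ x ∈ B, HasFDerivWithinAt (fun x ↦ u x + s • x)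
      (fderiv ℝ u x + s • ContinuousLinearMap.id ℝ E) B x := fun x _ ↦
    ((hu' x).hasFDerivAt.add ((hasFDerivAt_id x).const_smul s)).hasFDerivWithinAt
  have hchange := integral_image_eq_integral_abs_det_fderiv_smul μ hB hderiv
    (bijective_add_smul_of_lipschitzWith hu hs).injective.injOn fun _ ↦ (1 : ℝ)
  simp only [setIntegral_const, smul_eq_mul, mul_one] at hchange
  rw [hchange]
  refine setIntegral_congr_fun hB fun x _ ↦ (abs_of_pos ?_).symm
  exact det_add_smul_id_pos ((norm_fderiv_le_of_lipschitz ℝ hu).trans_lt hs)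

theorem setIntegral_det_fderiv_eq_sum {u : E → E} {K : ℝ≥0} {s : Finset ℝ} {B : Set E}
    (hu : LipschitzWith K u) (hu' : ContDiff ℝ 1 u) (hcard : finrank ℝ E < s.card)
    (hs : ∀ t ∈ s, K < t) (hB : MeasurableSet B) (hB' : Bornology.IsBounded B) :
    ∫ x in B, (fderiv ℝ u x).det ∂μ = ∑ t ∈ s, (Lagrange.basis s id t).eval 0 *
      μ.real ((fun x ↦ u x + t • x) '' B) := by
  have hcont (t : ℝ) : Continuous fun x ↦ (fderiv ℝ u x + t • ContinuousLinearMap.id ℝ E).det :=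
    ContinuousLinearMap.continuous_det.comp
      ((hu'.continuous_fderiv one_ne_zero).add continuous_const)
  simp_rw [fun x ↦ det_eq_sum_lagrange_basis_mul_det_add_smul_id hcard (fderiv ℝ u x)]
  rw [integral_finsetSum _ fun t _ ↦
    (integrableOn_of_continuous_of_isBounded (hcont t) hB').const_mul _]
  refine Finset.sum_congr rfl fun t ht ↦ ?_
  rw [integral_const_mul, setIntegral_det_fderiv_add_smul_id μ hu
    (hu'.differentiable one_ne_zero) (hs t ht) hB]

theorem setIntegral_det_fderiv_congr_of_lipschitzWith {u v : E → E} {K : ℝ≥0} {B : Set E}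
    (hu : LipschitzWith K u) (hv : LipschitzWith K v) (hu' : ContDiff ℝ 1 u)
    (hv' : ContDiff ℝ 1 v) (hB : MeasurableSet B) (hB' : Bornology.IsBounded B)
    (h : EqOn u v Bᶜ) :
    ∫ x in B, (fderiv ℝ u x).det ∂μ = ∫ x in B, (fderiv ℝ v x).det ∂μ := by
  obtain ⟨s, hsK, hs⟩ := (Ioi_infinite (K : ℝ)).exists_subset_card_eq (finrank ℝ E + 1)
  have hcard : finrank ℝ E < s.card := hs ▸ Nat.lt_succ_self _
  rw [setIntegral_det_fderiv_eq_sum μ hu hu' hcard hsK hB hB',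
    setIntegral_det_fderiv_eq_sum μ hv hv' hcard hsK hB hB']
  refine Finset.sum_congr rfl fun t ht ↦ ?_
  rw [image_eq_image_of_bijective_of_eqOn_compl
    (bijective_add_smul_of_lipschitzWith hu (hsK ht))
    (bijective_add_smul_of_lipschitzWith hv (hsK ht))
    fun x hx ↦ congrArg (· + t • x) (h hx)]

theorem setIntegral_det_fderiv_congr {u v : E → E} {B : Set E} (hu : ContDiff ℝ 1 u)
    (hv : ContDiff ℝ 1 v) (hB : MeasurableSet B) (hB' : Bornology.IsBounded B)
    (h : EqOn u v Bᶜ) :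
    ∫ x in B, (fderiv ℝ u x).det ∂μ = ∫ x in B, (fderiv ℝ v x).det ∂μ := by
  obtain ⟨R, hR, hBR⟩ := hB'.subset_ball_lt 0 (0 : E)
  let χ : ContDiffBump (0 : E) := ⟨R, R + 1, hR, lt_add_one R⟩
  have hχ : ContDiff ℝ 1 χ := χ.contDiff
  have hlip {w : E → E} (hw : ContDiff ℝ 1 w) : ∃ K, LipschitzWith K fun x ↦ χ x • w x :=
    (hχ.smul hw).lipschitzWith_of_hasCompactSupport χ.hasCompactSupport.smul_right one_ne_zero
  have hcutoff (w : E → E) : ∫ x in B, (fderiv ℝ w x).det ∂μ =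
      ∫ x in B, (fderiv ℝ (fun x ↦ χ x • w x) x).det ∂μ := by
    refine setIntegral_congr_fun hB fun x hx ↦ congrArg _ (EventuallyEq.fderiv_eq ?_)
    filter_upwards [isOpen_ball.mem_nhds (hBR hx)] with y hy
    rw [χ.one_of_mem_closedBall (ball_subset_closedBall hy), one_smul]
  obtain ⟨K, hK⟩ := hlip hu
  obtain ⟨K', hK'⟩ := hlip hv
  rw [hcutoff u, hcutoff v]
  exact setIntegral_det_fderiv_congr_of_lipschitzWith μ (hK.weaken (le_max_left K K'))
    (hK'.weaken (le_max_right K K')) (hχ.smul hu) (hχ.smul hv) hB hB'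
    fun x hx ↦ congrArg (χ x • ·) (h hx)

end JacobianIntegral

section JacobianBump

theorem exists_contDiff_deriv_bump {ε : ℝ} (hε : 0 < ε) :
    ∃ θ : ℝ → ℝ, ContDiff ℝ 1 θ ∧ (∀ t, 0 ≤ deriv θ t) ∧ 0 < deriv θ 0 ∧
      ∀ t, ε ≤ |t| → deriv θ t = 0 := by
  let r : ℝ → ℝ := fun t ↦ max 0 (ε - |t|)
  have hr : Continuous r := by fun_prop
  let θ : ℝ → ℝ := fun x ↦ ∫ t in (0 : ℝ)..x, r t
  have hθ (x : ℝ) : HasDerivAt θ (r x) x := (hr.integral_hasStrictDerivAt 0 x).hasDerivAt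
  have hderiv : deriv θ = r := funext fun x ↦ (hθ x).deriv
  refine ⟨θ, contDiff_one_iff_deriv.2 ⟨fun x ↦ (hθ x).differentiableAt, hderiv ▸ hr⟩, ?_⟩
  simp only [hderiv]
  exact ⟨fun t ↦ le_max_left _ _, by simpa [r] using hε, fun t ht ↦ max_eq_left (sub_nonpos.2 ht)⟩

theorem det_fderiv_pi_apply {ι : Type*} [Fintype ι] {θ : ι → ℝ → ℝ}
    (hθ : ∀ i, Differentiable ℝ (θ i)) (y : ι → ℝ) :
    (fderiv ℝ (fun (z : ι → ℝ) i ↦ θ i (z i)) y).det = ∏ i, deriv (θ i) (y i) := by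
  have hderiv : HasFDerivAt (fun (z : ι → ℝ) i ↦ θ i (z i))
      (ContinuousLinearMap.pi fun i ↦
        (ContinuousLinearMap.toSpanSingleton ℝ (deriv (θ i) (y i))).comp
          (ContinuousLinearMap.proj i)) y :=
    hasFDerivAt_pi.2 fun i ↦ (hθ i (y i)).hasDerivAt.hasFDerivAt.comp y (hasFDerivAt_apply i y)
  rw [hderiv.fderiv, ContinuousLinearMap.det_pi]
  simp only [ContinuousLinearMap.det_toSpanSingleton]

theorem det_fderiv_conj {E F : Type*} [NormedAddCommGroup E] [NormedSpace ℝ E]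
    [NormedAddCommGroup F] [NormedSpace ℝ F] (e : E ≃L[ℝ] F) {Ψ : F → F}
    (hΨ : Differentiable ℝ Ψ) (y : E) :
    (fderiv ℝ (e.symm ∘ Ψ ∘ e) y).det = (fderiv ℝ Ψ (e y)).det := by
  rw [e.symm.comp_fderiv, fderiv_comp y (hΨ _) e.differentiableAt, e.fderiv]
  exact LinearMap.det_conj (fderiv ℝ Ψ (e y) : F →ₗ[ℝ] F) e.symm.toLinearEquiv

theorem exists_contDiff_det_fderiv_bump {E : Type*} [NormedAddCommGroup E] [NormedSpace ℝ E]
    [FiniteDimensional ℝ E] {s : Set E} (hs : s ∈ 𝓝 0) :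
    ∃ Φ : E → E, ContDiff ℝ 1 Φ ∧ (∀ y, 0 ≤ (fderiv ℝ Φ y).det) ∧ 0 < (fderiv ℝ Φ 0).det ∧
      ∀ y ∉ s, (fderiv ℝ Φ y).det = 0 := by
  let e : E ≃L[ℝ] (Fin (finrank ℝ E) → ℝ) := (finBasis ℝ E).equivFunL
  obtain ⟨ε, hε, hball⟩ : ∃ ε > 0, ball 0 ε ⊆ e.symm ⁻¹' s :=
    Metric.mem_nhds_iff.1 (e.symm.continuous.tendsto' 0 0 (map_zero _) hs)
  obtain ⟨θ, hθ, hθ_nonneg, hθ_pos, hθ_supp⟩ := exists_contDiff_deriv_bump hε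
  let Ψ : (Fin (finrank ℝ E) → ℝ) → Fin (finrank ℝ E) → ℝ := fun z i ↦ θ (z i)
  have hΨ : ContDiff ℝ 1 Ψ := contDiff_pi.2 fun i ↦ hθ.comp (contDiff_apply ℝ ℝ i)
  have hdet (y : E) : (fderiv ℝ (e.symm ∘ Ψ ∘ e) y).det = ∏ i, deriv θ (e y i) := by
    rw [det_fderiv_conj e (hΨ.differentiable one_ne_zero),
      det_fderiv_pi_apply fun _ ↦ hθ.differentiable one_ne_zero]
  refine ⟨e.symm ∘ Ψ ∘ e, e.symm.contDiff.comp (hΨ.comp e.contDiff), ?_⟩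
  simp only [hdet]
  refine ⟨fun y ↦ Finset.prod_nonneg fun i _ ↦ hθ_nonneg _,
    Finset.prod_pos fun i _ ↦ by simpa using hθ_pos, fun y hy ↦ ?_⟩
  obtain ⟨i, hi⟩ : ∃ i, ε ≤ |e y i| := by
    by_contra! hlt
    exact hy (by simpa using hball (mem_ball_zero_iff.2 ((pi_norm_lt_iff hε).2 hlt)))
  exact Finset.prod_eq_zero (Finset.mem_univ i) (hθ_supp _ hi)

end JacobianBump

section DegreeOfContDiff

theorem exists_mem_nhds_forall_mem_of_isCompact {X Y : Type*} [TopologicalSpace X]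
    [TopologicalSpace Y] [T2Space Y] {u : X → Y} (hu : Continuous u) {K W : Set X}
    (hK : IsCompact K) (hW : IsOpen W) {y : Y} (h : ∀ x ∈ K, u x = y → x ∈ W) :
    ∃ s ∈ 𝓝 y, ∀ x ∈ K, u x ∈ s → x ∈ W := by
  refine ⟨(u '' (K \ W))ᶜ, ((hK.diff hW).image hu).isClosed.isOpen_compl.mem_nhds ?_, ?_⟩
  · rintro ⟨x, hx, hxy⟩
    exact hx.2 (h x hx.1 hxy)
  · intro x hxK hxs
    by_contra hxW
    exact hxs (mem_image_of_mem u ⟨hxK, hxW⟩)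

theorem setIntegral_pos_of_continuous_of_isOpen {X : Type*} [MetricSpace X] [ProperSpace X]
    [MeasurableSpace X] [OpensMeasurableSpace X] {μ : Measure X} [IsFiniteMeasureOnCompacts μ]
    [μ.IsOpenPosMeasure] {f : X → ℝ} (hf : Continuous f) {Ω : Set X} (hΩ : IsOpen Ω)
    (hΩb : Bornology.IsBounded Ω) (hf_nonneg : ∀ x ∈ Ω, 0 ≤ f x) {z : X} (hz : z ∈ Ω)
    (hfz : f z ≠ 0) : 0 < ∫ x in Ω, f x ∂μ := by
  rw [setIntegral_pos_iff_support_of_nonneg_ae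
    ((ae_restrict_iff' hΩ.measurableSet).2 (ae_of_all _ hf_nonneg))
    (integrableOn_of_continuous_of_isBounded hf hΩb)]
  exact (hf.isOpen_support.inter hΩ).measure_pos μ ⟨z, hfz, hz⟩

variable {E : Type*} [NormedAddCommGroup E] [NormedSpace ℝ E]

theorem det_fderiv_comp {Φ u : E → E} (hΦ : Differentiable ℝ Φ) (hu : Differentiable ℝ u)
    (x : E) : (fderiv ℝ (Φ ∘ u) x).det = (fderiv ℝ Φ (u x)).det * (fderiv ℝ u x).det := by
  rw [fderiv_comp x (hΦ _) (hu _)]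
  exact LinearMap.det_comp _ _

variable [FiniteDimensional ℝ E] {u v : E → E} {Ω : Set E}

/- Both `∫ det D(Φ ∘ u)` and `∫ det D(Φ ∘ v)` over `Ω` compute the same degree, and only points
near the zeros of `u`, respectively `v`, contribute to them. -/
theorem forall_ne_zero_of_det_fderiv_neg_of_det_fderiv_pos (hu : ContDiff ℝ 1 u)
    (hv : ContDiff ℝ 1 v) (hΩ : IsOpen Ω) (hΩb : Bornology.IsBounded Ω) (huv : EqOn u v Ωᶜ)
    (hu_neg : ∀ x ∈ closure Ω, u x = 0 → (fderiv ℝ u x).det < 0)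
    (hv_pos : ∀ x ∈ closure Ω, v x = 0 → 0 < (fderiv ℝ v x).det) : ∀ x ∈ Ω, v x ≠ 0 := by
  intro z hz hvz
  borelize E
  let μ : Measure E := Measure.addHaar
  obtain ⟨s, hs, hus⟩ := exists_mem_nhds_forall_mem_of_isCompact hu.continuous
    hΩb.isCompact_closure (isOpen_lt (continuous_det_fderiv hu) continuous_const) hu_neg
  obtain ⟨t, ht, hvt⟩ := exists_mem_nhds_forall_mem_of_isCompact hv.continuous
    hΩb.isCompact_closure (isOpen_lt continuous_const (continuous_det_fderiv hv)) hv_pos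
  obtain ⟨Φ, hΦ, hΦ_nonneg, hΦ_pos, hΦ_supp⟩ := exists_contDiff_det_fderiv_bump (inter_mem hs ht)
  have hdet {w : E → E} (hw : ContDiff ℝ 1 w) (x : E) :=
    det_fderiv_comp (hΦ.differentiable one_ne_zero) (hw.differentiable one_ne_zero) x
  have hint_u : ∫ x in Ω, (fderiv ℝ (Φ ∘ u) x).det ∂μ ≤ 0 := by
    refine setIntegral_nonpos hΩ.measurableSet fun x hx ↦ ?_
    rw [hdet hu]
    by_cases hmem : u x ∈ s ∩ t
    · exact mul_nonpos_of_nonneg_of_nonpos (hΦ_nonneg _) (hus x (subset_closure hx) hmem.1).le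
    · rw [hΦ_supp _ hmem, zero_mul]
  have hv_nonneg : ∀ x ∈ Ω, 0 ≤ (fderiv ℝ (Φ ∘ v) x).det := by
    intro x hx
    rw [hdet hv]
    by_cases hmem : v x ∈ s ∩ t
    · exact mul_nonneg (hΦ_nonneg _) (hvt x (subset_closure hx) hmem.2).le
    · rw [hΦ_supp _ hmem, zero_mul]
  have hz_pos : 0 < (fderiv ℝ (Φ ∘ v) z).det := by
    rw [hdet hv, hvz]
    exact mul_pos hΦ_pos (hv_pos z (subset_closure hz) hvz)
  have hint_v : 0 < ∫ x in Ω, (fderiv ℝ (Φ ∘ v) x).det ∂μ :=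
    setIntegral_pos_of_continuous_of_isOpen (continuous_det_fderiv (hΦ.comp hv)) hΩ hΩb
      hv_nonneg hz hz_pos.ne'
  have hint_eq := setIntegral_det_fderiv_congr μ (hΦ.comp hu) (hΦ.comp hv) hΩ.measurableSet hΩb
    fun x hx ↦ congrArg Φ (huv hx)
  exact hint_v.not_ge (hint_eq ▸ hint_u)

theorem exists_zeros_det_fderiv_mul_pos_of_contDiff (hu : ContDiff ℝ 1 u) (hv : ContDiff ℝ 1 v)
    (hΩ : IsOpen Ω) (hΩb : Bornology.IsBounded Ω) (huv : EqOn u v Ωᶜ)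
    (hu_ne : ∀ x ∈ closure Ω, u x = 0 → (fderiv ℝ u x).det ≠ 0)
    (hv_ne : ∀ x ∈ closure Ω, v x = 0 → (fderiv ℝ v x).det ≠ 0)
    (hu_zero : ∃ x ∈ Ω, u x = 0) (hv_zero : ∃ x ∈ Ω, v x = 0) :
    ∃ x ∈ closure Ω, ∃ y ∈ closure Ω, u x = 0 ∧ v y = 0 ∧
      0 < (fderiv ℝ u x).det * (fderiv ℝ v y).det := by
  by_contra! hle
  have hneg : ∀ x ∈ closure Ω, ∀ y ∈ closure Ω, u x = 0 → v y = 0 →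
      (fderiv ℝ u x).det * (fderiv ℝ v y).det < 0 := fun x hx y hy hux hvy ↦
    (hle x hx y hy hux hvy).lt_of_ne (mul_ne_zero (hu_ne x hx hux) (hv_ne y hy hvy))
  obtain ⟨x, hx, hux⟩ := hu_zero
  obtain ⟨y, hy, hvy⟩ := hv_zero
  have hx' := subset_closure hx
  have hy' := subset_closure hy
  rcases mul_neg_iff.1 (hneg x hx' y hy' hux hvy) with ⟨hu_pos, hv_neg⟩ | ⟨hu_neg, hv_pos⟩
  · exact forall_ne_zero_of_det_fderiv_neg_of_det_fderiv_pos hv hu hΩ hΩb huv.symm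
      (fun z hz hvz ↦ (pos_iff_neg_of_mul_neg (hneg x hx' z hz hux hvz)).1 hu_pos)
      (fun z hz huz ↦ (pos_iff_neg_of_mul_neg (hneg z hz y hy' huz hvy)).2 hv_neg) x hx hux
  · exact forall_ne_zero_of_det_fderiv_neg_of_det_fderiv_pos hu hv hΩ hΩb huv
      (fun z hz huz ↦ (neg_iff_pos_of_mul_neg (hneg z hz y hy' huz hvy)).2 hv_pos)
      (fun z hz hvz ↦ (neg_iff_pos_of_mul_neg (hneg x hx' z hz hux hvz)).1 hu_neg) y hy hvy

end DegreeOfContDiff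

section RegularZeros

variable {E F : Type*} [NormedAddCommGroup E] [NormedSpace ℝ E] [NormedAddCommGroup F]
  [NormedSpace ℝ F]

theorem exists_contDiff_forall_mem_convex_of_local [FiniteDimensional ℝ E] {t : E → Set F}
    (ht : ∀ x, Convex ℝ (t x))
    (h : ∀ x, ∃ g : E → F, ContDiff ℝ 1 g ∧ ∀ᶠ y in 𝓝 x, g y ∈ t y) :
    ∃ g : E → F, ContDiff ℝ 1 g ∧ ∀ y, g y ∈ t y := by
  obtain ⟨g, hg⟩ := exists_contMDiffMap_forall_mem_convex_of_local (n := 1) 𝓘(ℝ, E) ht fun x ↦ by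
    obtain ⟨g, hg, hmem⟩ := h x
    exact ⟨_, hmem, g, hg.contMDiff.contMDiffOn, fun y hy ↦ hy⟩
  exact ⟨g, g.contMDiff.contDiff, hg⟩

theorem norm_fderiv_apply_le_of_eventually_norm_le {G : Type*} [NormedAddCommGroup G]
    [NormedSpace ℝ G] {f : E → F} {g : E → G} {f' : E →L[ℝ] F} {g' : E →L[ℝ] G} {x : E} {c : ℝ}
    (hf : HasFDerivAt f f' x) (hg : HasFDerivAt g g' x) (hfx : f x = 0) (hgx : g x = 0)
    (h : ∀ᶠ y in 𝓝 x, ‖f y‖ ≤ c * ‖g y‖) (v : E) : ‖f' v‖ ≤ c * ‖g' v‖ := by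
  have hf_slope := (hf.hasLineDerivAt v).tendsto_slope_zero_right
  have hg_slope := (hg.hasLineDerivAt v).tendsto_slope_zero_right
  have hline : Tendsto (fun t : ℝ ↦ x + t • v) (𝓝[>] 0) (𝓝 x) :=
    ((by fun_prop : Continuous fun t : ℝ ↦ x + t • v).tendsto' 0 x (by simp)).mono_left
      nhdsWithin_le_nhds
  refine le_of_tendsto_of_tendsto hf_slope.norm (hg_slope.norm.const_mul c) ?_
  filter_upwards [hline.eventually h] with t ht
  rw [hfx, hgx, sub_zero, sub_zero, norm_smul, norm_smul, mul_left_comm]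
  exact mul_le_mul_of_nonneg_left ht (norm_nonneg _)

theorem eq_zero_iff_of_norm_sub_le_mul {V : Type*} [NormedAddCommGroup V] {a b : V} {c : ℝ}
    (hc : c < 1) (h : ‖a - b‖ ≤ c * ‖b‖) : a = 0 ↔ b = 0 := by
  refine ⟨?_, ?_⟩ <;> rintro rfl
  · rw [zero_sub, norm_neg] at h
    exact norm_le_zero_iff.1 (by nlinarith)
  · simpa using h

/-- `G` is continuous at every point of `s` and differentiable with invertible derivative `G' x`
at each of its zeros `x ∈ s`. These are the maps whose degree is the number of zeros, counted with
the signs of the Jacobian; nothing is asked of `G' x` where `G x ≠ 0`. -/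
structure HasRegularZerosOn (G : E → E) (G' : E → E →L[ℝ] E) (s : Set E) : Prop where
  continuousAt : ∀ x ∈ s, ContinuousAt G x
  hasFDerivAt : ∀ x ∈ s, G x = 0 → HasFDerivAt G (G' x) x
  det_ne_zero : ∀ x ∈ s, G x = 0 → (G' x).det ≠ 0

namespace HasRegularZerosOn

variable {G : E → E} {G' : E → E →L[ℝ] E} {s : Set E} {x : E} {ε : ℝ}

theorem sub_const {g : E → E} (hg : ∀ x ∈ s, HasFDerivAt g (G' x) x)
    (hdet : ∀ x ∈ s, (G' x).det ≠ 0) (b : E) : HasRegularZerosOn (fun x ↦ g x - b) G' s where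
  continuousAt x hx := ((hg x hx).sub_const b).continuousAt
  hasFDerivAt x hx _ := (hg x hx).sub_const b
  det_ne_zero x hx _ := hdet x hx

variable [FiniteDimensional ℝ E]

theorem det_mul_det_pos_of_norm_sub_le {u : E → E} {u' : E →L[ℝ] E}
    (hG : HasRegularZerosOn G G' s) (hx : x ∈ s) (hu : HasFDerivAt u u' x) (hux : u x = 0)
    (hGx : G x = 0) (hε : ε < 1) (h : ∀ᶠ y in 𝓝 x, ‖u y - G y‖ ≤ ε * ‖G y‖) :
    0 < u'.det * (G' x).det := by
  have hG'x := hG.hasFDerivAt x hx hGx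
  refine _root_.det_mul_det_pos_of_norm_sub_lt fun v hv ↦ ?_
  have hle : ‖u' v - G' x v‖ ≤ ε * ‖G' x v‖ :=
    norm_fderiv_apply_le_of_eventually_norm_le (hu.fun_sub hG'x) hG'x (by simp [hux, hGx]) hGx h v
  have hpos : 0 < ‖G' x v‖ := norm_pos_iff.2 fun hzero ↦ hv <|
    ((G' x).toContinuousLinearEquivOfDetNeZero (hG.det_ne_zero x hx hGx)).injective
      (hzero.trans (map_zero _).symm)
  exact hle.trans_lt (mul_lt_of_lt_one_left hpos hε)

theorem exists_contDiff_eventually_norm_sub_le (hG : HasRegularZerosOn G G' s) (hx : x ∈ s)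
    (hε : 0 < ε) :
    ∃ g : E → E, ContDiff ℝ 1 g ∧ ∀ᶠ y in 𝓝 x, ‖g y - G y‖ ≤ ε * ‖G y‖ := by
  by_cases hGx : G x = 0
  · refine ⟨fun y ↦ G' x (y - x), by fun_prop, ?_⟩
    have hderiv := hG.hasFDerivAt x hx hGx
    have hbound := (hderiv.isLittleO.trans_isBigO
      (isBigO_sub_rev_of_det_ne_zero hderiv (hG.det_ne_zero x hx hGx))).bound hε
    simpa only [hGx, sub_zero, norm_sub_rev (G _)] using hbound
  · refine ⟨fun _ ↦ G x, contDiff_const, ?_⟩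
    have hcont := hG.continuousAt x hx
    refine ((continuousAt_const.sub hcont).norm.eventually_lt (hcont.norm.const_mul ε) ?_).mono
      fun y hy ↦ hy.le
    simpa using mul_pos hε (norm_pos_iff.2 hGx)

theorem exists_contDiff_forall_norm_sub_le (hG : HasRegularZerosOn G G' s) (hs : IsClosed s)
    (hε : 0 < ε) : ∃ v : E → E, ContDiff ℝ 1 v ∧ ∀ y ∈ s, ‖v y - G y‖ ≤ ε * ‖G y‖ := by
  refine exists_contDiff_forall_mem_convex_of_local
    (t := fun y ↦ {w | y ∈ s → ‖w - G y‖ ≤ ε * ‖G y‖}) (fun y ↦ ?_) fun x ↦ ?_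
  · by_cases hy : y ∈ s
    · simpa [hy, closedBall, dist_eq_norm] using convex_closedBall (G y) _
    · simpa [hy] using convex_univ
  · by_cases hx : x ∈ s
    · obtain ⟨g, hg, hle⟩ := hG.exists_contDiff_eventually_norm_sub_le hx hε
      exact ⟨g, hg, hle.mono fun y hy _ ↦ hy⟩
    · refine ⟨0, contDiff_const, ?_⟩
      filter_upwards [hs.isOpen_compl.mem_nhds hx] with y hy hys
      exact absurd hys hy

theorem exists_contDiff_eqOn_compl_forall_norm_sub_le {v : E → E} {Ω : Set E}
    (hG : HasRegularZerosOn G G' (closure Ω)) (hΩ : IsOpen Ω) (hv : ContDiff ℝ 1 v) (hε : 0 < ε)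
    (hvG : ∀ x ∈ frontier Ω, ‖v x - G x‖ < ε * ‖G x‖) :
    ∃ u : E → E, ContDiff ℝ 1 u ∧ EqOn u v Ωᶜ ∧ ∀ y ∈ Ω, ‖u y - G y‖ ≤ ε * ‖G y‖ := by
  suffices ∃ u : E → E, ContDiff ℝ 1 u ∧
      ∀ y, u y ∈ {w | (y ∈ Ωᶜ → w = v y) ∧ (y ∈ Ω → ‖w - G y‖ ≤ ε * ‖G y‖)} by
    obtain ⟨u, hu, hmem⟩ := this
    exact ⟨u, hu, fun y hy ↦ (hmem y).1 hy, fun y hy ↦ (hmem y).2 hy⟩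
  refine exists_contDiff_forall_mem_convex_of_local (fun y ↦ ?_) fun x ↦ ?_
  · by_cases hy : y ∈ Ω
    · simpa [hy, closedBall, dist_eq_norm] using convex_closedBall (G y) _
    · simp [hy]
  · by_cases hx : x ∈ Ω
    · obtain ⟨g, hg, hle⟩ := hG.exists_contDiff_eventually_norm_sub_le (subset_closure hx) hε
      refine ⟨g, hg, ?_⟩
      filter_upwards [hle, hΩ.mem_nhds hx] with y hy hyΩ
      exact ⟨fun hyΩc ↦ absurd hyΩ hyΩc, fun _ ↦ hy⟩
    refine ⟨v, hv, ?_⟩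
    by_cases hx' : x ∈ closure Ω
    · have hcont := hG.continuousAt x hx'
      have hlt := (hv.continuous.continuousAt.sub hcont).norm.eventually_lt
        (hcont.norm.const_mul ε) (hvG x (hΩ.frontier_eq ▸ ⟨hx', hx⟩))
      exact hlt.mono fun y hy ↦ ⟨fun _ ↦ rfl, fun _ ↦ hy.le⟩
    · filter_upwards [isClosed_closure.isOpen_compl.mem_nhds hx'] with y hy
      exact ⟨fun _ ↦ rfl, fun hyΩ ↦ absurd (subset_closure hyΩ) hy⟩

variable {G₀ G₁ : E → E} {G₀' G₁' : E → E →L[ℝ] E} {Ω : Set E}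

/- Near the boundary the approximation of `G₀` is glued to that of `G₁`, which makes the two
approximations agree outside `Ω`. -/
theorem exists_contDiff_approx_pair (hG₀ : HasRegularZerosOn G₀ G₀' (closure Ω))
    (hG₁ : HasRegularZerosOn G₁ G₁' (closure Ω)) (hΩ : IsOpen Ω)
    (hclose : ∀ x ∈ frontier Ω, ‖G₀ x - G₁ x‖ < 1 / 4 * ‖G₁ x‖) :
    ∃ u v : E → E, ContDiff ℝ 1 u ∧ ContDiff ℝ 1 v ∧ EqOn u v Ωᶜ ∧
      (∀ x ∈ frontier Ω, v x ≠ 0) ∧ (∀ x ∈ Ω, ‖u x - G₀ x‖ ≤ 1 / 2 * ‖G₀ x‖) ∧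
      ∀ x ∈ Ω, ‖v x - G₁ x‖ ≤ 1 / 2 * ‖G₁ x‖ := by
  obtain ⟨v, hv, hvG₁⟩ := hG₁.exists_contDiff_forall_norm_sub_le isClosed_closure
    (show (0 : ℝ) < 1 / 8 by norm_num)
  have hvG₀ : ∀ x ∈ frontier Ω, ‖v x - G₀ x‖ < 1 / 2 * ‖G₀ x‖ := by
    intro x hx
    have hv_near := hvG₁ x (frontier_subset_closure hx)
    have htri := norm_sub_le_norm_sub_add_norm_sub (v x) (G₁ x) (G₀ x)
    rw [norm_sub_rev (G₁ x)] at htri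
    have hG₁_le := norm_le_norm_add_norm_sub (G₀ x) (G₁ x)
    linarith [hclose x hx]
  obtain ⟨u, hu, huv, huG₀⟩ := hG₀.exists_contDiff_eqOn_compl_forall_norm_sub_le hΩ hv
    one_half_pos hvG₀
  refine ⟨u, v, hu, hv, huv, fun x hx hvx ↦ ?_, huG₀, fun x hx ↦ ?_⟩
  · have hlt := hvG₀ x hx
    rw [hvx, zero_sub, norm_neg] at hlt
    linarith [norm_nonneg (G₀ x)]
  · linarith [hvG₁ x (subset_closure hx), norm_nonneg (G₁ x)]

theorem exists_zeros_det_mul_pos (hG₀ : HasRegularZerosOn G₀ G₀' (closure Ω))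
    (hG₁ : HasRegularZerosOn G₁ G₁' (closure Ω)) (hΩ : IsOpen Ω) (hΩb : Bornology.IsBounded Ω)
    (hclose : ∀ x ∈ frontier Ω, ‖G₀ x - G₁ x‖ < 1 / 4 * ‖G₁ x‖)
    (hG₀_zero : ∃ x ∈ Ω, G₀ x = 0) (hG₁_zero : ∃ x ∈ Ω, G₁ x = 0) :
    ∃ x ∈ closure Ω, ∃ y ∈ closure Ω, G₀ x = 0 ∧ G₁ y = 0 ∧ 0 < (G₀' x).det * (G₁' y).det := by
  obtain ⟨u, v, hu, hv, huv, hv_ne, huG₀, hvG₁⟩ := hG₀.exists_contDiff_approx_pair hG₁ hΩ hclose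
  have hv_mem : ∀ x ∈ closure Ω, v x = 0 → x ∈ Ω := fun x hx hvx ↦ by
    by_contra hxΩ
    exact hv_ne x (hΩ.frontier_eq ▸ ⟨hx, hxΩ⟩) hvx
  have hu_mem : ∀ x ∈ closure Ω, u x = 0 → x ∈ Ω := fun x hx hux ↦ by
    by_contra hxΩ
    exact hxΩ (hv_mem x hx (huv hxΩ ▸ hux))
  have hsign {w H : E → E} {H' : E → E →L[ℝ] E} (hw : ContDiff ℝ 1 w)
      (hH : HasRegularZerosOn H H' (closure Ω)) (hwH : ∀ y ∈ Ω, ‖w y - H y‖ ≤ 1 / 2 * ‖H y‖)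
      (hw_mem : ∀ x ∈ closure Ω, w x = 0 → x ∈ Ω) :
      ∀ x ∈ closure Ω, w x = 0 → H x = 0 ∧ 0 < (fderiv ℝ w x).det * (H' x).det := by
    intro x hx hwx
    have hxΩ := hw_mem x hx hwx
    have hHx := (eq_zero_iff_of_norm_sub_le_mul one_half_lt_one (hwH x hxΩ)).1 hwx
    exact ⟨hHx, hH.det_mul_det_pos_of_norm_sub_le hx
      (hw.differentiable one_ne_zero x).hasFDerivAt hwx hHx one_half_lt_one
      (eventually_of_mem (hΩ.mem_nhds hxΩ) hwH)⟩
  have hu_sign := hsign hu hG₀ huG₀ hu_mem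
  have hv_sign := hsign hv hG₁ hvG₁ hv_mem
  obtain ⟨x, hx, y, hy, hux, hvy, hpos⟩ := exists_zeros_det_fderiv_mul_pos_of_contDiff hu hv hΩ hΩb
    huv (fun x hx hux ↦ left_ne_zero_of_mul (hu_sign x hx hux).2.ne')
    (fun x hx hvx ↦ left_ne_zero_of_mul (hv_sign x hx hvx).2.ne')
    (hG₀_zero.imp fun x hx ↦
      ⟨hx.1, (eq_zero_iff_of_norm_sub_le_mul one_half_lt_one (huG₀ x hx.1)).2 hx.2⟩)
    (hG₁_zero.imp fun x hx ↦
      ⟨hx.1, (eq_zero_iff_of_norm_sub_le_mul one_half_lt_one (hvG₁ x hx.1)).2 hx.2⟩)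
  obtain ⟨hG₀x, hpos₀⟩ := hu_sign x hx hux
  obtain ⟨hG₁y, hpos₁⟩ := hv_sign y hy hvy
  refine ⟨x, hx, y, hy, hG₀x, hG₁y, (pos_iff_pos_of_mul_pos ?_).1 hpos⟩
  rw [mul_mul_mul_comm]
  exact mul_pos hpos₀ hpos₁

end HasRegularZerosOn

end RegularZeros

section SignFrontier

variable {X : Type*} [TopologicalSpace X] {d : X → ℝ} {U : Set X}

/-- The points near which `d` takes both signs on `U`. If `d` vanishes nowhere on `U`, these are the
points at which the sign of `d` jumps. -/
def signFrontier (d : X → ℝ) (U : Set X) : Set X :=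
  closure {x ∈ U | 0 < d x} ∩ closure {x ∈ U | d x < 0}

theorem isClosed_signFrontier : IsClosed (signFrontier d U) :=
  isClosed_closure.inter isClosed_closure

theorem mul_pos_of_isPreconnected_of_disjoint_signFrontier {S : Set X} (hS : IsPreconnected S)
    (hSU : S ⊆ U) (hd : ∀ x ∈ S, d x ≠ 0) (hdisj : Disjoint S (signFrontier d U)) {x y : X}
    (hx : x ∈ S) (hy : y ∈ S) : 0 < d x * d y := by
  have hpos {z : X} (hz : z ∈ S) (hzn : z ∉ closure {x ∈ U | d x < 0}) : 0 < d z :=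
    (hd z hz).lt_or_gt.resolve_left fun h ↦ hzn (subset_closure ⟨hSU hz, h⟩)
  have hneg {z : X} (hz : z ∈ S) (hzp : z ∉ closure {x ∈ U | 0 < d x}) : d z < 0 :=
    (hd z hz).lt_or_gt.resolve_right fun h ↦ hzp (subset_closure ⟨hSU hz, h⟩)
  have hcover : S ⊆ (closure {x ∈ U | 0 < d x})ᶜ ∪ (closure {x ∈ U | d x < 0})ᶜ := by
    rw [← compl_inter]
    exact hdisj.subset_compl_right
  have hseparated : S ∩ ((closure {x ∈ U | 0 < d x})ᶜ ∩ (closure {x ∈ U | d x < 0})ᶜ) = ∅ :=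
    eq_empty_of_forall_notMem fun z hz ↦ (hneg hz.1 hz.2.1).not_gt (hpos hz.1 hz.2.2)
  rcases isPreconnected_iff_subset_of_disjoint.1 hS _ _ isClosed_closure.isOpen_compl
    isClosed_closure.isOpen_compl hcover hseparated with hSn | hSp
  · exact mul_pos_of_neg_of_neg (hneg hx (hSn hx)) (hneg hy (hSn hy))
  · exact mul_pos (hpos hx (hSp hx)) (hpos hy (hSp hy))

theorem exists_mem_mul_neg_of_mem_signFrontier {a : X} {V : Set X} (ha : a ∈ signFrontier d U)
    (hda : d a ≠ 0) (hV : V ∈ 𝓝 a) : ∃ z ∈ V, d z * d a < 0 := by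
  rcases hda.lt_or_gt with hneg | hpos
  · obtain ⟨z, hzV, -, hz⟩ := mem_closure_iff_nhds.1 ha.1 V hV
    exact ⟨z, hzV, mul_neg_of_pos_of_neg hz hneg⟩
  · obtain ⟨z, hzV, -, hz⟩ := mem_closure_iff_nhds.1 ha.2 V hV
    exact ⟨z, hzV, mul_neg_of_neg_of_pos hz hpos⟩

/- The ball is centred at a point near `a` where `d` has the sign opposite to that of `d a`, and
reaches out to the nearest point of the sign frontier. -/
theorem exists_ball_forall_mul_neg_of_mem_signFrontier {E : Type*} [NormedAddCommGroup E]
    [NormedSpace ℝ E] [ProperSpace E] {d : E → ℝ} {U : Set E} {a : E} (hU : U ∈ 𝓝 a)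
    (hd : ∀ x ∈ U, d x ≠ 0) (ha : a ∈ signFrontier d U)
    (hsign : ∀ᶠ x in 𝓝 a, x ∈ signFrontier d U → 0 < d x * d a) :
    ∃ x ∈ U, ∃ z ≠ x, ball z (dist x z) ⊆ U ∧ ∀ y ∈ ball z (dist x z), d y * d x < 0 := by
  obtain ⟨ε, hε, hball⟩ := Metric.mem_nhds_iff.1 (inter_mem hU hsign)
  obtain ⟨z, hz, hza_neg⟩ := exists_mem_mul_neg_of_mem_signFrontier ha
    (hd a (mem_of_mem_nhds hU)) (ball_mem_nhds a (half_pos hε))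
  obtain ⟨x, hx, hxz⟩ := isClosed_signFrontier.exists_infDist_eq_dist ⟨a, ha⟩ z
  rw [dist_comm z x] at hxz
  have hza : dist z a < ε / 2 := hz
  have hxz_le : dist x z ≤ dist z a := hxz ▸ infDist_le_dist_of_mem ha
  have hxa : x ∈ ball a ε := (dist_triangle x z a).trans_lt (by linarith)
  have hsub : ball z (dist x z) ⊆ U := fun y hy ↦
    (hball (ball_subset_ball' (by linarith) hy)).1
  have hdisj : Disjoint (ball z (dist x z)) (signFrontier d U) := hxz ▸ disjoint_ball_infDist
  have hxa_pos : 0 < d x * d a := (hball hxa).2 hx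
  have hzx : z ≠ x := by
    rintro rfl
    exact hza_neg.not_gt hxa_pos
  refine ⟨x, (hball hxa).1, z, hzx, hsub, fun y hy ↦ ?_⟩
  have hyz_pos : 0 < d y * d z :=
    mul_pos_of_isPreconnected_of_disjoint_signFrontier (convex_ball z _).isPreconnected hsub
      (fun w hw ↦ hd w (hsub hw)) hdisj hy (mem_ball_self (dist_pos.2 hzx.symm))
  have hprod : d y * d x * (d z * d a * (d z * d a)) < 0 := by
    calc d y * d x * (d z * d a * (d z * d a))
        = d y * d z * (d x * d a) * (d z * d a) := by ring
      _ < 0 := mul_neg_of_pos_of_neg (mul_pos hyz_pos hxa_pos) hza_neg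
  exact neg_of_mul_neg_left hprod (mul_self_nonneg _)

end SignFrontier

section Darboux

theorem exists_mem_nhds_forall_dist_le_mul_dist {X Y : Type*} [PseudoMetricSpace X]
    [PseudoMetricSpace Y] {g : X → Y} {F : Set X} [BaireSpace F] (hF : F.Nonempty)
    (hg : ContinuousOn g F)
    (h : ∀ x ∈ F, ∃ k : ℝ, ∀ᶠ y in 𝓝 x, dist y x ≤ k * dist (g y) (g x)) :
    ∃ a ∈ F, ∃ κ > (0 : ℝ), ∃ V ∈ 𝓝 a, ∀ x ∈ F ∩ V, ∀ y ∈ V,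
      dist y x ≤ κ * dist (g y) (g x) := by
  have : Nonempty F := hF.to_subtype
  let S : ℕ → Set F := fun m ↦ {x | ∀ y, dist y (x : X) < 1 / (m + 1 : ℝ) →
    dist y x ≤ (m + 1 : ℝ) * dist (g y) (g x)}
  have hS_closed (m : ℕ) : IsClosed (S m) := by
    have hgF : Continuous fun x : F ↦ g x := continuousOn_iff_continuous_domRestrict.1 hg
    simp only [S, ofPred_forall]
    refine isClosed_iInter fun y ↦ isClosed_imp ?_ ?_
    · exact isOpen_lt (by fun_prop) continuous_const
    · exact isClosed_le (by fun_prop) (continuous_const.mul (continuous_const.dist hgF))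
  have hS_cover : ⋃ m, S m = univ := by
    refine eq_univ_of_forall fun x ↦ ?_
    obtain ⟨k, hk⟩ := h x x.2
    obtain ⟨r, hr, hball⟩ := Metric.eventually_nhds_iff.1 hk
    have hlarge : ∀ᶠ m : ℕ in atTop, k ≤ (m + 1 : ℝ) ∧ 1 / (m + 1 : ℝ) < r :=
      ((tendsto_natCast_atTop_atTop.atTop_add tendsto_const_nhds).eventually_ge_atTop k).and
        (tendsto_one_div_add_atTop_nhds_zero_nat.eventually_lt_const hr)
    obtain ⟨m, hkm, hmr⟩ := hlarge.exists
    exact mem_iUnion.2 ⟨m, fun y hy ↦ (hball (hy.trans hmr)).trans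
      (mul_le_mul_of_nonneg_right hkm dist_nonneg)⟩
  obtain ⟨m, a, ha⟩ := nonempty_interior_of_iUnion_of_closed hS_closed hS_cover
  obtain ⟨V, hV, hVS⟩ := mem_nhds_subtype F a _ |>.1 (mem_interior_iff_mem_nhds.1 ha)
  have hm : (0 : ℝ) < m + 1 := m.cast_add_one_pos
  refine ⟨a, a.2, m + 1, hm, V ∩ ball a (1 / (m + 1) / 2),
    inter_mem hV (ball_mem_nhds _ (by positivity)), fun x hx y hy ↦ ?_⟩
  have hyx : dist y x < 1 / (m + 1 : ℝ) := (dist_triangle_right y x a).trans_lt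
    (add_halves (1 / (m + 1 : ℝ)) ▸ add_lt_add hy.2 hx.2.2)
  exact hVS (show (⟨x, hx.1⟩ : F) ∈ Subtype.val ⁻¹' V from hx.2.1) y hyx

variable {E : Type*} [NormedAddCommGroup E] [NormedSpace ℝ E]

theorem eventually_forall_norm_sub_sub_lt {F : Type*} [NormedAddCommGroup F] [NormedSpace ℝ F]
    {g : E → F} {L : E →L[ℝ] F} {x : E} {K : ℝ≥0} {c : ℝ} (hg : HasFDerivAt g L x)
    (hL : AntilipschitzWith K L) (hK : 0 < K) (hc : 0 < c) :
    ∀ᶠ w in 𝓝[≠] x, ∀ y, dist y w = dist w x / 2 →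
      ‖g y - g w - L (y - w)‖ < c * ‖L (y - w)‖ := by
  have : (0 : ℝ) < K := hK
  have hε : 0 < c / (6 * K) := by positivity
  obtain ⟨δ, hδ, hsmall⟩ := Metric.eventually_nhds_iff.1 (hg.isLittleO.bound hε)
  filter_upwards [eventually_mem_nhdsWithin,
    nhdsWithin_le_nhds (ball_mem_nhds x (half_pos hδ))] with w hwx hwδ y hyw
  have hr : 0 < dist w x := dist_pos.2 hwx
  have hwδ' : dist w x < δ / 2 := hwδ
  have hyx : dist y x ≤ 3 / 2 * dist w x := by linarith [dist_triangle y w x]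
  have hy_err := hsmall (show dist y x < δ by linarith)
  have hw_err := hsmall (show dist w x < δ by linarith)
  have hlow : dist w x / 2 ≤ K * ‖L (y - w)‖ := by
    rw [← hyw, map_sub, ← dist_eq_norm]
    exact hL.le_mul_dist y w
  rw [← dist_eq_norm y x] at hy_err
  rw [← dist_eq_norm w x] at hw_err
  calc ‖g y - g w - L (y - w)‖
      = ‖(g y - g x - L (y - x)) - (g w - g x - L (w - x))‖ := by
        simp only [map_sub]
        congr 1
        abel
    _ ≤ c / (6 * K) * dist y x + c / (6 * K) * dist w x :=
        (norm_sub_le _ _).trans (add_le_add hy_err hw_err)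
    _ ≤ c / (6 * K) * (5 / 2 * dist w x) := by nlinarith
    _ < c / (6 * K) * (3 * dist w x) := by gcongr; norm_num
    _ ≤ c / (6 * K) * (6 * (K * ‖L (y - w)‖)) := by gcongr ?_ * ?_; linarith
    _ = c * ‖L (y - w)‖ := by field_simp

theorem frequently_closedBall_subset_ball {x z : E} (hzx : z ≠ x) :
    ∃ᶠ w in 𝓝[≠] x, closedBall w (dist w x / 2) ⊆ ball z (dist x z) := by
  have hD : 0 < dist x z := dist_pos.2 hzx.symm
  have hline : Tendsto (AffineMap.lineMap x z : ℝ → E) (𝓝[>] 0) (𝓝[≠] x) := by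
    refine tendsto_nhdsWithin_iff.2 ⟨?_, ?_⟩
    · exact (AffineMap.lineMap_continuous.tendsto' 0 x (by simp)).mono_left nhdsWithin_le_nhds
    · filter_upwards [self_mem_nhdsWithin] with t (ht : 0 < t)
      rw [mem_compl_singleton_iff, ← dist_pos, dist_lineMap_left]
      exact mul_pos (norm_pos_iff.2 ht.ne') hD
  refine hline.frequently (Eventually.frequently ?_)
  filter_upwards [Ioo_mem_nhdsGT one_pos] with t ⟨ht0, ht1⟩
  refine closedBall_subset_ball' ?_
  rw [dist_lineMap_left, dist_lineMap_right, Real.norm_of_nonneg ht0.le,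
    Real.norm_of_nonneg (sub_nonneg.2 ht1.le)]
  linarith [mul_pos ht0 hD]

variable [FiniteDimensional ℝ E] {g : E → E} {g' : E → E →L[ℝ] E}

theorem eventually_det_mul_det_pos_of_dist_le_mul_dist {F V : Set E} {a : E} {κ : ℝ} (hV : V ∈ 𝓝 a)
    (hg : ∀ x ∈ V, HasFDerivAt g (g' x) x) (hdet : ∀ x ∈ V, (g' x).det ≠ 0) (haF : a ∈ F)
    (hκ : 0 < κ) (hlow : ∀ x ∈ F ∩ V, ∀ y ∈ V, dist y x ≤ κ * dist (g y) (g x)) :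
    ∀ᶠ x in 𝓝 a, x ∈ F → 0 < (g' x).det * (g' a).det := by
  have haV := mem_of_mem_nhds hV
  obtain ⟨R, hR, hRV⟩ := nhds_basis_closedBall.mem_iff.1 hV
  have hclosure : closure (ball a R) = closedBall a R := closure_ball a hR.ne'
  have hzero {x y : E} (hx : x ∈ F ∩ V) (hy : y ∈ closure (ball a R)) (hyx : g y - g x = 0) :
      y = x := by
    have hle := hlow x hx y (hRV (hclosure ▸ hy))
    rwa [sub_eq_zero.1 hyx, dist_self, mul_zero, dist_le_zero] at hle
  have hregular (b : E) : HasRegularZerosOn (fun y ↦ g y - b) g' (closure (ball a R)) :=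
    .sub_const (fun y hy ↦ hg y (hRV (hclosure ▸ hy))) (fun y hy ↦ hdet y (hRV (hclosure ▸ hy))) b
  filter_upwards [ball_mem_nhds a hR,
    (hg a haV).continuousAt (ball_mem_nhds (g a) (show 0 < R / (4 * κ) by positivity))]
    with x hxR hgx hxF
  have hxV := hRV (ball_subset_closedBall hxR)
  have hclose : ∀ y ∈ frontier (ball a R),
      ‖(g y - g x) - (g y - g a)‖ < 1 / 4 * ‖g y - g a‖ := by
    intro y hy
    rw [frontier_ball a hR.ne', mem_sphere] at hy
    have hle := hlow a ⟨haF, haV⟩ y (hRV hy.le)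
    rw [sub_sub_sub_cancel_left, norm_sub_rev, ← dist_eq_norm, ← dist_eq_norm]
    calc dist (g x) (g a) < R / (4 * κ) := hgx
      _ ≤ κ * dist (g y) (g a) / (4 * κ) := by rw [← hy]; gcongr
      _ = 1 / 4 * dist (g y) (g a) := by field_simp
  obtain ⟨x', hx', a', ha', hgx', hga', hpos⟩ := (hregular (g x)).exists_zeros_det_mul_pos
    (hregular (g a)) isOpen_ball isBounded_ball hclose ⟨x, hxR, sub_self _⟩
    ⟨a, mem_ball_self hR, sub_self _⟩
  rwa [hzero ⟨hxF, hxV⟩ hx' hgx', hzero ⟨haF, haV⟩ ha' hga'] at hpos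

/- Blow-up at `x`: on small spheres inside the ball and close to `x`, the map `g` is approximated by
its linearization at `x`. -/
theorem exists_mem_ball_det_mul_det_pos {x z : E} {L : E →L[ℝ] E} (hgx : HasFDerivAt g L x)
    (hL : L.det ≠ 0) (hzx : z ≠ x) (hg : ∀ y ∈ ball z (dist x z), HasFDerivAt g (g' y) y)
    (hdet : ∀ y ∈ ball z (dist x z), (g' y).det ≠ 0) :
    ∃ y ∈ ball z (dist x z), 0 < (g' y).det * L.det := by
  obtain ⟨K, hK, hLK⟩ := exists_antilipschitzWith_of_det_ne_zero hL
  have hlinear := eventually_forall_norm_sub_sub_lt hgx hLK hK (show (0 : ℝ) < 1 / 4 by norm_num)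
  obtain ⟨w, hsub, hclose, hwx⟩ := ((frequently_closedBall_subset_ball hzx).and_eventually
    (hlinear.and eventually_mem_nhdsWithin)).exists
  have hr : 0 < dist w x / 2 := half_pos (dist_pos.2 hwx)
  rw [← closure_ball w hr.ne'] at hsub
  have hG₀ : HasRegularZerosOn (fun y ↦ g y - g w) g' (closure (ball w (dist w x / 2))) :=
    .sub_const (fun y hy ↦ hg y (hsub hy)) (fun y hy ↦ hdet y (hsub hy)) (g w)
  have hG₁ : HasRegularZerosOn (fun y ↦ L y - L w) (fun _ ↦ L)
      (closure (ball w (dist w x / 2))) :=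
    .sub_const (fun _ _ ↦ L.hasFDerivAt) (fun _ _ ↦ hL) (L w)
  obtain ⟨y, hy, -, -, -, -, hpos⟩ := hG₀.exists_zeros_det_mul_pos hG₁ isOpen_ball isBounded_ball
    (fun y hy ↦ by
      rw [frontier_ball w hr.ne'] at hy
      simpa only [map_sub] using hclose y hy)
    ⟨w, mem_ball_self hr, sub_self _⟩ ⟨w, mem_ball_self hr, sub_self _⟩
  exact ⟨y, hsub hy, hpos⟩

variable {U : Set E}

theorem exists_mem_inter_eventually_det_mul_det_pos {C : Set E} (hU : IsOpen U)
    (hC : IsClosed C) (hUC : (U ∩ C).Nonempty) (hg : ∀ x ∈ U, HasFDerivAt g (g' x) x)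
    (hdet : ∀ x ∈ U, (g' x).det ≠ 0) :
    ∃ a ∈ U ∩ C, ∀ᶠ x in 𝓝 a, x ∈ C → 0 < (g' x).det * (g' a).det := by
  have : BaireSpace ↥(U ∩ C) := (hU.isGδ.inter hC.isGδ).baireSpace_of_t2Space_locallyCompactSpace
  have hlow : ∀ x ∈ U ∩ C, ∃ k : ℝ, ∀ᶠ y in 𝓝 x, dist y x ≤ k * dist (g y) (g x) := by
    intro x hx
    simpa only [dist_eq_norm] using
      (isBigO_sub_rev_of_det_ne_zero (hg x hx.1) (hdet x hx.1)).bound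
  obtain ⟨a, ha, κ, hκ, V, hV, hVlow⟩ := exists_mem_nhds_forall_dist_le_mul_dist hUC
    (fun x hx ↦ (hg x hx.1).continuousAt.continuousWithinAt) hlow
  refine ⟨a, ha, ?_⟩
  filter_upwards [hU.mem_nhds ha.1, eventually_det_mul_det_pos_of_dist_le_mul_dist
    (inter_mem (hU.mem_nhds ha.1) hV) (fun x hx ↦ hg x hx.1) (fun x hx ↦ hdet x hx.1) ha hκ
    fun x hx y hy ↦ hVlow x ⟨hx.1, hx.2.2⟩ y hy.2] with x hxU hpos hxC
  exact hpos ⟨hxU, hxC⟩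

theorem det_mul_det_pos_of_isPreconnected (hU : IsOpen U) (hUc : IsPreconnected U)
    (hg : ∀ x ∈ U, HasFDerivAt g (g' x) x) (hdet : ∀ x ∈ U, (g' x).det ≠ 0) {p q : E}
    (hp : p ∈ U) (hq : q ∈ U) : 0 < (g' p).det * (g' q).det := by
  let d : E → ℝ := fun x ↦ (g' x).det
  suffices Disjoint U (signFrontier d U) from
    mul_pos_of_isPreconnected_of_disjoint_signFrontier hUc subset_rfl hdet this hp hq
  refine disjoint_left.2 fun b hbU hbC ↦ ?_
  obtain ⟨a, ⟨haU, haC⟩, hsign⟩ := exists_mem_inter_eventually_det_mul_det_pos hU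
    isClosed_signFrontier ⟨b, hbU, hbC⟩ hg hdet
  obtain ⟨x, hxU, z, hzx, hsub, hneg⟩ :=
    exists_ball_forall_mul_neg_of_mem_signFrontier (hU.mem_nhds haU) hdet haC hsign
  obtain ⟨y, hy, hpos⟩ := exists_mem_ball_det_mul_det_pos (hg x hxU) (hdet x hxU) hzx
    (fun y hy ↦ hg y (hsub hy)) fun y hy ↦ hdet y (hsub hy)
  exact (hneg y hy).not_gt hpos

theorem exists_det_eq_zero_of_det_mul_det_neg (hU : IsOpen U) (hUc : IsPreconnected U)
    (hg : ∀ x ∈ U, HasFDerivAt g (g' x) x) {p q : E} (hp : p ∈ U) (hq : q ∈ U)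
    (hpq : (g' p).det * (g' q).det < 0) : ∃ x ∈ U, (g' x).det = 0 := by
  by_contra! hdet
  exact hpq.not_gt (det_mul_det_pos_of_isPreconnected hU hUc hg hdet hp hq)

theorem darboux_eigenvalue_left_general {f : E → E} {f' : E → E →L[ℝ] E} (hU : IsOpen U)
    (hUc : IsPreconnected U) (hf : ∀ x ∈ U, HasFDerivAt f (f' x) x) {x₀ x₁ : E} (hx₀ : x₀ ∈ U)
    (hx₁ : x₁ ∈ U) {α : ℝ} {n₀ n₁ : ℕ} {q₀ q₁ : ℝ → ℝ} (hq₀_cont : ContinuousAt q₀ α)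
    (hq₁_cont : ContinuousAt q₁ α)
    (hq₀ : ∀ l < α, (f' x₀ - l • ContinuousLinearMap.id ℝ E).det = q₀ l * (α - l) ^ n₀)
    (hq₁ : ∀ l < α, (f' x₁ - l • ContinuousLinearMap.id ℝ E).det = q₁ l * (α - l) ^ n₁)
    (hα : q₀ α * q₁ α < 0) :
    ∃ δ > 0, ∀ l ∈ Ioo (α - δ) α, ∃ x₂ ∈ U,
      (f' x₂ - l • ContinuousLinearMap.id ℝ E).det = 0 := by
  obtain ⟨δ, hδ, hneg⟩ := Metric.eventually_nhds_iff.1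
    ((hq₀_cont.mul hq₁_cont).eventually_lt continuousAt_const hα)
  refine ⟨δ, hδ, fun l ⟨hl, hlα⟩ ↦ ?_⟩
  have hq_neg : q₀ l * q₁ l < 0 := hneg (by rw [Real.dist_eq, abs_lt]; constructor <;> linarith)
  have hpow_pos : 0 < (α - l) ^ n₀ * (α - l) ^ n₁ :=
    mul_pos (pow_pos (sub_pos.2 hlα) _) (pow_pos (sub_pos.2 hlα) _)
  refine exists_det_eq_zero_of_det_mul_det_neg hU hUc (g := fun x ↦ f x - l • x)
    (fun x hx ↦ (hf x hx).sub ((hasFDerivAt_id x).const_smul l)) hx₀ hx₁ ?_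
  rw [hq₀ l hlα, hq₁ l hlα, mul_mul_mul_comm]
  exact mul_neg_of_neg_of_pos hq_neg hpow_pos

end Darboux

/-- If the characteristic-type polynomials at `x₀, x₁` factor as
`q₀(λ)·(α−λ)^{n₀}` with `n₀` odd and `q₁(λ)·(α−λ)^{n₁}` with `n₁` even, and
`q₀(α)·q₁(α) < 0`, then for all `λ` slightly to the left of `α` some `x₂ ∈ U`
satisfies `det (f' x₂ − λ·id) = 0`. -/
theorem darboux_eigenvalue_left
    {n : ℕ} {U : Set (EuclideanSpace ℝ (Fin n))} (hU : IsOpen U) (hUconn : IsConnected U)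
    (f : EuclideanSpace ℝ (Fin n) → EuclideanSpace ℝ (Fin n))
    (f' : EuclideanSpace ℝ (Fin n) → EuclideanSpace ℝ (Fin n) →L[ℝ] EuclideanSpace ℝ (Fin n))
    (hf : ∀ x ∈ U, HasFDerivAt f (f' x) x)
    (x₀ x₁ : EuclideanSpace ℝ (Fin n)) (hx₀ : x₀ ∈ U) (hx₁ : x₁ ∈ U)
    (α : ℝ) (n₀ n₁ : ℕ) (hn₀ : Odd n₀) (hn₁ : Even n₁)
    (q₀ q₁ : Polynomial ℝ)
    (hq₀ : ∀ l : ℝ,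
      (f' x₀ - l • ContinuousLinearMap.id ℝ (EuclideanSpace ℝ (Fin n))).det
        = q₀.eval l * (α - l) ^ n₀)
    (hq₁ : ∀ l : ℝ,
      (f' x₁ - l • ContinuousLinearMap.id ℝ (EuclideanSpace ℝ (Fin n))).det
        = q₁.eval l * (α - l) ^ n₁)
    (hα : q₀.eval α * q₁.eval α < 0) :
    ∃ δ > (0 : ℝ), ∀ l ∈ Set.Ioo (α - δ) α,
      ∃ x₂ ∈ U, (f' x₂ - l • ContinuousLinearMap.id ℝ (EuclideanSpace ℝ (Fin n))).det = 0 := by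
  exact darboux_eigenvalue_left_general hU hUconn.isPreconnected hf hx₀ hx₁
    q₀.continuous.continuousAt q₁.continuous.continuousAt (fun l _ ↦ hq₀ l) (fun l _ ↦ hq₁ l) hα
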